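/- arXiv:2307.08402 — 3 statements merged into one kernel-verified Lean document; each statement's English description precedes it below -/
import Mathlib

section
/- Let p ∈ [1,∞) and let μ, ν be probability measures on ℝ with finite p-th moments, with distribution functions F and G respectively. Let π* be the pushforward of Lebesgue measure on (0,1) under the map u ↦ (F⁻¹(u), G⁻¹(u)). Then π* is a coupling of μ and ν, and for every coupling π of μ and ν one has ∫_{ℝ×ℝ} |x−y|^p dπ*(x,y) ≤ ∫_{ℝ×ℝ} |x−y|^p dπ(x,y); that is, π* is an optimal coupling for the p-Wasserstein distance. -/
/-!
The proof is a layer-cake argument. For `p ≥ 1` there is a measure `κ` on `[0, ∞)` (the second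
derivative of `r ↦ r₊ ^ p`) such that `r₊ ^ p = ∫ (r - a)₊ dκ(a)` (`exists_hinge_measure`). Since
`(y - x - a)₊` is the length of `{t | x ≤ t - a, t < y}`, Tonelli's theorem gives
`∫ (y - x)₊ ^ p dπ = ∫∫ π((-∞, t - a] × (t, ∞)) dt dκ(a)`
(`lintegral_hinge_eq`), and `|x - y| ^ p = (y - x)₊ ^ p + (x - y)₊ ^ p`. It therefore suffices to
compare `π((-∞, s] × (t, ∞))` for all `s`, `t`. Every coupling gives this set mass at least
`F s - G t`, while the Galois connection `F⁻¹ u ≤ x ↔ u ≤ F x` identifies its mass under the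
comonotone coupling with the length of `{u ∈ (0, 1) | G t < u ≤ F s}`, which is at most
`(F s - G t)₊`.
-/

open MeasureTheory ENNReal Set

/-- Generalized inverse (quantile function) of a distribution function `F`. -/
noncomputable def qinv (F : ℝ → ℝ) (u : ℝ) : ℝ := sInf {x : ℝ | u ≤ F x}

/-- `π` is a coupling of `μ` and `ν`. -/
def IsCoupling {α : Type*} [MeasurableSpace α] (π : MeasureTheory.Measure (α × α))
    (μ ν : MeasureTheory.Measure α) : Prop :=
  π.map Prod.fst = μ ∧ π.map Prod.snd = ν

/-! ### The quantile function -/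

/-- The Galois connection between a distribution function and its generalized inverse. The bounds
on `u` make the infimum one of a nonempty set bounded below, hence not a junk value. -/
lemma qinv_le_iff {μ : Measure ℝ} [IsProbabilityMeasure μ] {F : ℝ → ℝ}
    (hF : ∀ x, F x = (μ (Iic x)).toReal) {u : ℝ} (hu : u ∈ Ioo (0 : ℝ) 1) (x : ℝ) :
    qinv F u ≤ x ↔ u ≤ F x := by
  obtain rfl : F = ProbabilityTheory.cdf μ := by
    funext x
    rw [hF, ProbabilityTheory.cdf_eq_real]
    rfl
  have hne : {x : ℝ | u ≤ ProbabilityTheory.cdf μ x}.Nonempty :=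
    ((ProbabilityTheory.tendsto_cdf_atTop μ).eventually (eventually_ge_nhds hu.2)).exists
  obtain ⟨b, hb⟩ :=
    ((ProbabilityTheory.tendsto_cdf_atBot μ).eventually (eventually_lt_nhds hu.1)).exists
  have hbdd : BddBelow {x : ℝ | u ≤ ProbabilityTheory.cdf μ x} := by
    refine ⟨b, fun y hy => ?_⟩
    by_contra! h
    exact absurd (hy.trans (ProbabilityTheory.monotone_cdf μ h.le)) (not_le.2 hb)
  constructor
  · intro h
    -- Every point right of `x` lies in the set; right-continuity of the distribution function
    -- then places `x` itself in it.
    have hright : ∀ y, x < y → u ≤ ProbabilityTheory.cdf μ y := by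
      intro y hy
      obtain ⟨z, hz, hzy⟩ := exists_lt_of_csInf_lt hne (lt_of_le_of_lt h hy)
      exact le_trans hz (ProbabilityTheory.monotone_cdf μ hzy.le)
    have hcont := ((ProbabilityTheory.cdf μ).right_continuous x).tendsto.mono_left
      (nhdsWithin_mono x Ioi_subset_Ici_self)
    exact ge_of_tendsto hcont (by filter_upwards [self_mem_nhdsWithin] with y hy using hright y hy)
  · intro h
    exact csInf_le hbdd h

lemma aemeasurable_qinv {μ : Measure ℝ} [IsProbabilityMeasure μ] {F : ℝ → ℝ}
    (hF : ∀ x, F x = (μ (Iic x)).toReal) :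
    AEMeasurable (qinv F) (volume.restrict (Ioo (0 : ℝ) 1)) := by
  refine aemeasurable_restrict_of_monotoneOn measurableSet_Ioo ?_
  intro u hu v hv huv
  rw [qinv_le_iff hF hu]
  exact huv.trans ((qinv_le_iff hF hv _).1 le_rfl)

lemma map_qinv {μ : Measure ℝ} [IsProbabilityMeasure μ] {F : ℝ → ℝ}
    (hF : ∀ x, F x = (μ (Iic x)).toReal) :
    Measure.map (qinv F) (volume.restrict (Ioo (0 : ℝ) 1)) = μ := by
  have hfin : IsFiniteMeasure (Measure.map (qinv F) (volume.restrict (Ioo (0 : ℝ) 1))) :=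
    inferInstance
  refine Measure.ext_of_Iic _ _ fun x => ?_
  have hF1 : F x ≤ 1 := by
    rw [hF]
    exact ENNReal.toReal_le_of_le_ofReal zero_le_one (by simpa using prob_le_one)
  rw [Measure.map_apply_of_aemeasurable (aemeasurable_qinv hF) measurableSet_Iic,
    Measure.restrict_apply' measurableSet_Ioo]
  have hset : qinv F ⁻¹' Iic x ∩ Ioo (0 : ℝ) 1 = Iic (F x) ∩ Ioo (0 : ℝ) 1 := by
    ext u
    simp only [mem_inter_iff, mem_preimage, mem_Iic]
    exact and_congr_left fun hu => qinv_le_iff hF hu x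
  have hval : μ (Iic x) = ENNReal.ofReal (F x) := by
    rw [hF, ENNReal.ofReal_toReal (measure_ne_top _ _)]
  rw [hset, hval]
  apply le_antisymm
  · calc volume (Iic (F x) ∩ Ioo (0 : ℝ) 1) ≤ volume (Icc 0 (F x)) :=
          measure_mono fun u hu => ⟨hu.2.1.le, hu.1⟩
      _ = _ := by simp
  · calc ENNReal.ofReal (F x) = volume (Ioo 0 (F x)) := by simp
      _ ≤ volume (Iic (F x) ∩ Ioo (0 : ℝ) 1) :=
          measure_mono fun u hu => ⟨hu.2.le, hu.1, hu.2.trans_le hF1⟩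

/-- The comonotone coupling has the least mass on each quadrant `(-∞, s] × (t, ∞)` among all
couplings. -/
lemma comonotone_quadrant_le {μ ν : Measure ℝ} [IsProbabilityMeasure μ] [IsProbabilityMeasure ν]
    {F G : ℝ → ℝ} (hF : ∀ x, F x = (μ (Iic x)).toReal) (hG : ∀ x, G x = (ν (Iic x)).toReal)
    {π : Measure (ℝ × ℝ)} (hπ : IsCoupling π μ ν) (s t : ℝ) :
    Measure.map (fun u => (qinv F u, qinv G u)) (volume.restrict (Ioo (0 : ℝ) 1))
        (Iic s ×ˢ Ioi t) ≤ π (Iic s ×ˢ Ioi t) := by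
  have hupper : Measure.map (fun u => (qinv F u, qinv G u)) (volume.restrict (Ioo (0 : ℝ) 1))
      (Iic s ×ˢ Ioi t) ≤ μ (Iic s) - ν (Iic t) := by
    rw [Measure.map_apply_of_aemeasurable ((aemeasurable_qinv hF).prodMk (aemeasurable_qinv hG))
      (measurableSet_Iic.prod measurableSet_Ioi), Measure.restrict_apply' measurableSet_Ioo]
    calc _ ≤ volume (Ioc (G t) (F s)) := by
          refine measure_mono ?_
          rintro u ⟨⟨h1, h2⟩, hu⟩
          refine ⟨?_, (qinv_le_iff hF hu s).1 h1⟩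
          by_contra! h
          exact absurd ((qinv_le_iff hG hu t).2 h) (not_le.2 h2)
      _ = μ (Iic s) - ν (Iic t) := by
          rw [Real.volume_Ioc, ENNReal.ofReal_sub _ (by rw [hG]; exact ENNReal.toReal_nonneg),
            hF, hG, ENNReal.ofReal_toReal (measure_ne_top _ _),
            ENNReal.ofReal_toReal (measure_ne_top _ _)]
  refine hupper.trans ?_
  rw [tsub_le_iff_right, ← hπ.1, ← hπ.2, Measure.map_apply measurable_fst measurableSet_Iic,
    Measure.map_apply measurable_snd measurableSet_Iic]
  refine (measure_mono ?_).trans (measure_union_le _ _)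
  intro z hz
  rcases le_or_gt z.2 t with h | h
  · exact Or.inr h
  · exact Or.inl ⟨hz, h⟩

/-! ### The layer-cake representation of the cost -/

/-- The power `r₊ ^ p` is a mixture of hinge functions `r ↦ (r - a)₊`. The positive part is
implicit in `ENNReal.ofReal`. -/
lemma exists_hinge_measure (p : ℝ) (hp : 1 ≤ p) :
    ∃ κ : Measure ℝ, SFinite κ ∧
      ∀ r : ℝ, ∫⁻ a, ENNReal.ofReal (r - a) ∂κ = ENNReal.ofReal (max r 0 ^ p) := by
  rcases hp.eq_or_lt with rfl | hp
  · refine ⟨Measure.dirac 0, inferInstance, fun r => ?_⟩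
    rw [lintegral_dirac' _ (by fun_prop)]
    rcases le_total r 0 with h | h
    · simp [h]
    · simp [h]
  have hmeas : Measurable fun a : ℝ => ENNReal.ofReal (p * (p - 1) * a ^ (p - 2)) := by fun_prop
  refine ⟨(volume.restrict (Ioi (0 : ℝ))).withDensity
    (fun a => ENNReal.ofReal (p * (p - 1) * a ^ (p - 2))), inferInstance, fun r => ?_⟩
  rw [lintegral_withDensity_eq_lintegral_mul _ hmeas (by fun_prop)]
  rcases le_or_gt r 0 with hr | hr
  · rw [max_eq_right hr, Real.zero_rpow (by linarith), ENNReal.ofReal_zero,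
      setLIntegral_congr_fun (g := fun _ => 0) measurableSet_Ioi, lintegral_zero]
    intro a ha
    have ha' : (0 : ℝ) < a := ha
    simp only [Pi.mul_apply]
    rw [ENNReal.ofReal_of_nonpos (p := r - a) (by linarith), mul_zero]
  rw [max_eq_left hr.le]
  have hint1 : IntervalIntegrable (fun a : ℝ => p * (p - 1) * r * a ^ (p - 2)) volume 0 r :=
    (intervalIntegral.intervalIntegrable_rpow' (by linarith)).const_mul _
  have hint2 : IntervalIntegrable (fun a : ℝ => p * (p - 1) * a ^ (p - 1)) volume 0 r :=
    (intervalIntegral.intervalIntegrable_rpow' (by linarith)).const_mul _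
  have hval : ∫ a in (0 : ℝ)..r,
      (p * (p - 1) * r * a ^ (p - 2) - p * (p - 1) * a ^ (p - 1)) = r ^ p := by
    rw [intervalIntegral.integral_sub hint1 hint2, intervalIntegral.integral_const_mul,
      intervalIntegral.integral_const_mul, integral_rpow (Or.inl (by linarith)),
      integral_rpow (Or.inl (by linarith))]
    have e1 : p - 2 + 1 = p - 1 := by ring
    have e2 : p - 1 + 1 = p := by ring
    have e3 : r ^ p = r * r ^ (p - 1) := by
      rw [← Real.rpow_one_add' hr.le (by linarith)]
      congr 1
      ring
    rw [e1, e2, Real.zero_rpow (by linarith), Real.zero_rpow (by linarith), e3]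
    have h1 : p - 1 ≠ 0 := by linarith
    have h2 : p ≠ 0 := by linarith
    field_simp
    ring
  have hfac : ∀ a ∈ Ioc (0 : ℝ) r, p * (p - 1) * r * a ^ (p - 2) - p * (p - 1) * a ^ (p - 1)
      = p * (p - 1) * a ^ (p - 2) * (r - a) := by
    intro a ha
    have e : a ^ (p - 1) = a * a ^ (p - 2) := by
      rw [← Real.rpow_one_add' ha.1.le (by linarith)]
      congr 1
      ring
    rw [e]
    ring
  have hnn : ∀ a ∈ Ioc (0 : ℝ) r, 0 ≤ p * (p - 1) * a ^ (p - 2) := by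
    intro a ha
    exact mul_nonneg (mul_nonneg (by linarith) (by linarith)) (Real.rpow_nonneg ha.1.le _)
  rw [← hval, intervalIntegral.integral_of_le hr.le, ofReal_integral_eq_lintegral_ofReal
    (hint1.sub hint2).1]
  · have hsplit : Ioi (0 : ℝ) = Ioc 0 r ∪ Ioi r := (Ioc_union_Ioi_eq_Ioi hr.le).symm
    rw [hsplit, lintegral_union measurableSet_Ioi (Ioc_disjoint_Ioi le_rfl),
      setLIntegral_congr_fun (g := fun _ => 0) (s := Ioi r) measurableSet_Ioi, lintegral_zero,
      add_zero]
    · refine setLIntegral_congr_fun measurableSet_Ioc fun a ha => ?_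
      simp only [Pi.mul_apply]
      rw [hfac a ha, ENNReal.ofReal_mul (hnn a ha)]
    · intro a ha
      have ha' : r < a := ha
      simp only [Pi.mul_apply]
      rw [ENNReal.ofReal_of_nonpos (p := r - a) (by linarith), mul_zero]
  · filter_upwards [ae_restrict_mem measurableSet_Ioc] with a ha
    rw [hfac a ha]
    exact mul_nonneg (hnn a ha) (by linarith [ha.2])

lemma lintegral_hinge_eq (κ : Measure ℝ) [SFinite κ] (π : Measure (ℝ × ℝ)) [SFinite π] :
    ∫⁻ z, ∫⁻ a, ENNReal.ofReal (z.2 - z.1 - a) ∂κ ∂π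
      = ∫⁻ a, ∫⁻ t, π (Iic (t - a) ×ˢ Ioi t) ∂volume ∂κ := by
  rw [lintegral_lintegral_swap (by fun_prop)]
  refine lintegral_congr fun a => ?_
  let S : Set ((ℝ × ℝ) × ℝ) := {w | w.1.1 ≤ w.2 - a} ∩ {w | w.2 < w.1.2}
  have hS : MeasurableSet S :=
    (measurableSet_le (by fun_prop) (by fun_prop)).inter
      (measurableSet_lt (by fun_prop) (by fun_prop))
  -- Both sides compute the `π × volume` measure of `S`, by slicing in the two orders.
  have h1 := Measure.prod_apply (μ := π) (ν := (volume : Measure ℝ)) hS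
  have h2 := Measure.prod_apply_symm (μ := π) (ν := (volume : Measure ℝ)) hS
  have hslice : ∀ z : ℝ × ℝ, volume (Prod.mk z ⁻¹' S) = ENNReal.ofReal (z.2 - z.1 - a) := by
    intro z
    have : Prod.mk z ⁻¹' S = Ico (z.1 + a) z.2 := by
      ext t
      simp only [S, mem_preimage, mem_inter_iff, mem_ofPred_eq, mem_Ico, le_sub_iff_add_le]
    rw [this, Real.volume_Ico, sub_sub]
  simp only [hslice] at h1
  rw [← h1, h2]
  rfl

/-- Smaller masses on the quadrants `(-∞, s] × (t, ∞)` give a smaller one-sided cost. -/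
lemma lintegral_posPart_rpow_le {p : ℝ} (hp : 1 ≤ p) (π₁ π₂ : Measure (ℝ × ℝ)) [SFinite π₁]
    [SFinite π₂] (h : ∀ s t : ℝ, π₁ (Iic s ×ˢ Ioi t) ≤ π₂ (Iic s ×ˢ Ioi t)) :
    ∫⁻ z, ENNReal.ofReal (max (z.2 - z.1) 0 ^ p) ∂π₁
      ≤ ∫⁻ z, ENNReal.ofReal (max (z.2 - z.1) 0 ^ p) ∂π₂ := by
  obtain ⟨κ, hκ, hκr⟩ := exists_hinge_measure p hp
  simp only [← hκr]
  rw [lintegral_hinge_eq, lintegral_hinge_eq]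
  exact lintegral_mono fun a => lintegral_mono fun t => h _ _

lemma lintegral_cost_eq {p : ℝ} (hp : 1 ≤ p) (π : Measure (ℝ × ℝ)) :
    ∫⁻ z, ENNReal.ofReal (|z.1 - z.2| ^ p) ∂π
      = ∫⁻ z, ENNReal.ofReal (max (z.2 - z.1) 0 ^ p) ∂π
        + ∫⁻ z, ENNReal.ofReal (max (z.2 - z.1) 0 ^ p) ∂(π.map Prod.swap) := by
  rw [lintegral_map (by fun_prop) measurable_swap, ← lintegral_add_left (by fun_prop)]
  refine lintegral_congr fun z => ?_
  have hp0 : p ≠ 0 := by linarith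
  simp only [Prod.fst_swap, Prod.snd_swap]
  rcases le_total z.1 z.2 with h | h
  · rw [max_eq_left (sub_nonneg.2 h), max_eq_right (sub_nonpos.2 h), Real.zero_rpow hp0,
      ENNReal.ofReal_zero, add_zero, abs_sub_comm, abs_of_nonneg (sub_nonneg.2 h)]
  · rw [max_eq_left (sub_nonneg.2 h), max_eq_right (sub_nonpos.2 h), Real.zero_rpow hp0,
      ENNReal.ofReal_zero, zero_add, abs_of_nonneg (sub_nonneg.2 h)]

lemma IsCoupling.swap {μ ν : Measure ℝ} {π : Measure (ℝ × ℝ)} (h : IsCoupling π μ ν) :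
    IsCoupling (π.map Prod.swap) ν μ := by
  constructor
  · rw [Measure.map_map measurable_fst measurable_swap]
    exact h.2
  · rw [Measure.map_map measurable_snd measurable_swap]
    exact h.1

lemma IsCoupling.isFiniteMeasure {μ ν : Measure ℝ} [IsFiniteMeasure μ] {π : Measure (ℝ × ℝ)}
    (h : IsCoupling π μ ν) : IsFiniteMeasure π := by
  refine ⟨?_⟩
  have := measure_lt_top μ univ
  rwa [← h.1, Measure.map_apply measurable_fst MeasurableSet.univ, preimage_univ] at this

/-! ### Optimality of the comonotone coupling -/

/-- the pushforward of Lebesgue measure on `(0,1)` under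
`u ↦ (F⁻¹(u), G⁻¹(u))` is a coupling of `μ` and `ν` and is optimal for the
`p`-Wasserstein distance. -/
theorem comonotone_coupling_optimal (p : ℝ) (hp : 1 ≤ p)
    (μ ν : MeasureTheory.Measure ℝ) [IsProbabilityMeasure μ] [IsProbabilityMeasure ν]
    (hμ : ∫⁻ x, ENNReal.ofReal (|x| ^ p) ∂μ ≠ ⊤)
    (hν : ∫⁻ x, ENNReal.ofReal (|x| ^ p) ∂ν ≠ ⊤)
    (F G : ℝ → ℝ)
    (hF : ∀ x, F x = (μ (Iic x)).toReal)
    (hG : ∀ x, G x = (ν (Iic x)).toReal)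
    (πstar : MeasureTheory.Measure (ℝ × ℝ))
    (hπstar : πstar
      = MeasureTheory.Measure.map (fun u => (qinv F u, qinv G u))
          (MeasureTheory.volume.restrict (Ioo (0:ℝ) 1))) :
    IsCoupling πstar μ ν ∧
      ∀ π : MeasureTheory.Measure (ℝ × ℝ), IsCoupling π μ ν →
        ∫⁻ z, ENNReal.ofReal (|z.1 - z.2| ^ p) ∂πstar
          ≤ ∫⁻ z, ENNReal.ofReal (|z.1 - z.2| ^ p) ∂π := by
  subst hπstar
  have hpair := (aemeasurable_qinv hF).prodMk (aemeasurable_qinv hG)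
  constructor
  · constructor
    · rw [AEMeasurable.map_map_of_aemeasurable measurable_fst.aemeasurable hpair]
      exact map_qinv hF
    · rw [AEMeasurable.map_map_of_aemeasurable measurable_snd.aemeasurable hpair]
      exact map_qinv hG
  intro π hπ
  have hfin := hπ.isFiniteMeasure
  have hswap : (Measure.map (fun u => (qinv F u, qinv G u))
      (volume.restrict (Ioo (0 : ℝ) 1))).map Prod.swap
      = Measure.map (fun u => (qinv G u, qinv F u)) (volume.restrict (Ioo (0 : ℝ) 1)) := by
    rw [AEMeasurable.map_map_of_aemeasurable measurable_swap.aemeasurable hpair]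
    rfl
  rw [lintegral_cost_eq hp, lintegral_cost_eq hp, hswap]
  exact add_le_add
    (lintegral_posPart_rpow_le hp _ _ (comonotone_quadrant_le hF hG hπ))
    (lintegral_posPart_rpow_le hp _ _ (comonotone_quadrant_le hG hF hπ.swap))
end

section
/- Let X, Y be real random variables with distribution functions F and G. Then the pair (X,Y) is comonotonic if and only if (X,Y) has the same joint distribution as (F⁻¹(U), G⁻¹(U)), where U is a random variable uniformly distributed on (0,1). -/
/-!
A law on `ℝ × ℝ` is determined by its values on the quadrants `Iic x ×ˢ Iic y`, and both sides of
the equivalence amount to the joint distribution function being `min (F x) (G y)`.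

If `(X, Y)` has the law of `(f(Z), g(Z))` with `f, g` nondecreasing, then `{f ≤ x}` and `{g ≤ y}`
are lower sets of the line, hence nested, so the joint distribution function is the minimum of
the marginal ones. For `(F⁻¹(U), G⁻¹(U))` the same value comes from the Galois connection
`F⁻¹(u) ≤ x ↔ u ≤ F x` on `(0, 1)` (`qinv_cdf_le_iff`).

Conversely, comonotonicity asks for a variable `Z` on the *given* probability space, which may
carry no uniform variable. The choice `Z = X + Y` works: if `a, b` are nondecreasing then `a` is a
nondecreasing function of `a + b`, and this function extends to all of `ℝ`
(`exists_monotone_of_add`).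
-/

open MeasureTheory ENNReal Set

/-- A pair `(X, Y)` of real random variables is comonotonic if it has the same joint
distribution as `(f(Z), g(Z))` for some random variable `Z` and nondecreasing `f, g`. -/
def Comonotonic {Ω : Type*} [MeasurableSpace Ω] (P : MeasureTheory.Measure Ω)
    (X Y : Ω → ℝ) : Prop :=
  ∃ (Z : Ω → ℝ) (f g : ℝ → ℝ), Measurable Z ∧ Monotone f ∧ Monotone g ∧
    P.map (fun ω => (X ω, Y ω)) = P.map (fun ω => (f (Z ω), g (Z ω)))

open ProbabilityTheory Filter Topology

/-- The Galois connection between a distribution function and its quantile function. -/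
lemma qinv_cdf_le_iff (μ : Measure ℝ) {u : ℝ} (hu : u ∈ Ioo (0 : ℝ) 1) (x : ℝ) :
    qinv (cdf μ) u ≤ x ↔ u ≤ cdf μ x := by
  have hne : {x : ℝ | u ≤ cdf μ x}.Nonempty := by
    obtain ⟨y, hy⟩ := ((tendsto_cdf_atTop μ).eventually (lt_mem_nhds hu.2)).exists
    exact ⟨y, le_of_lt hy⟩
  have hbdd : BddBelow {x : ℝ | u ≤ cdf μ x} := by
    obtain ⟨y, hy⟩ := ((tendsto_cdf_atBot μ).eventually (gt_mem_nhds hu.1)).exists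
    refine ⟨y, fun z hz => ?_⟩
    by_contra! h
    have := monotone_cdf μ h.le
    exact absurd (hz.trans this) (not_le.2 hy)
  constructor
  · intro h
    refine le_trans ?_ (monotone_cdf μ h)
    -- right continuity: the infimum defining the quantile is attained
    rw [← (cdf μ).iInf_Ioi_eq]
    refine le_ciInf fun r => ?_
    obtain ⟨z, hz, hzr⟩ := exists_lt_of_csInf_lt hne r.2
    exact le_trans hz (monotone_cdf μ hzr.le)
  · intro h
    exact csInf_le hbdd h

lemma monotoneOn_qinv_cdf (μ : Measure ℝ) : MonotoneOn (qinv (cdf μ)) (Ioo 0 1) := by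
  intro u hu v hv huv
  rw [qinv_cdf_le_iff μ hu]
  exact huv.trans ((qinv_cdf_le_iff μ hv _).1 le_rfl)

/-- If `a` and `b` are nondecreasing on `s`, then on `s` the function `a` is a nondecreasing
function of `a + b`. -/
lemma exists_monotone_of_add {a b : ℝ → ℝ} {s : Set ℝ} (ha : MonotoneOn a s)
    (hb : MonotoneOn b s) : ∃ f : ℝ → ℝ, Monotone f ∧ ∀ u ∈ s, f (a u + b u) = a u := by
  have key : ∀ u ∈ s, ∀ v ∈ s, a v ≤ a u + max ((a v + b v) - (a u + b u)) 0 := by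
    intro u hu v hv
    rcases le_total u v with h | h
    · have := hb hu hv h
      have := le_max_left ((a v + b v) - (a u + b u)) 0
      linarith
    · have := ha hv hu h
      have := le_max_right ((a v + b v) - (a u + b u)) 0
      linarith
  -- `a` is a 1-Lipschitz function of `a + b`; this is a one-sided McShane extension, the positive
  -- part making it monotone.
  let φ : ℝ → s → ℝ := fun z u => a u + max (z - (a u + b u)) 0
  have hbdd : ∀ z, BddBelow (range (φ z)) := by
    intro z
    rcases s.eq_empty_or_nonempty with rfl | ⟨v, hv⟩
    · simp [range_eq_empty]
    · refine ⟨a v - max ((a v + b v) - z) 0, ?_⟩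
      rintro _ ⟨⟨u, hu⟩, rfl⟩
      have h1 := key u hu v hv
      have h2 : max ((a v + b v) - (a u + b u)) 0
          ≤ max ((a v + b v) - z) 0 + max (z - (a u + b u)) 0 := by
        have := le_max_left ((a v + b v) - z) 0
        have := le_max_right ((a v + b v) - z) 0
        have := le_max_left (z - (a u + b u)) 0
        have := le_max_right (z - (a u + b u)) 0
        apply max_le <;> linarith
      simp only [φ]
      linarith
  refine ⟨fun z => ⨅ u, φ z u, fun z w hzw => ?_, fun v hv => ?_⟩
  · refine ciInf_mono (hbdd z) fun u => ?_
    simp only [φ]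
    gcongr
  · have : Nonempty s := ⟨⟨v, hv⟩⟩
    apply le_antisymm
    · refine (ciInf_le (hbdd _) ⟨v, hv⟩).trans ?_
      simp [φ]
    · exact le_ciInf fun u => key u u.2 v hv

/-- A probability measure on the plane is determined by its joint distribution function. -/
lemma ext_of_Iic_prod (μ ν : Measure (ℝ × ℝ)) [IsProbabilityMeasure μ] [IsProbabilityMeasure ν]
    (h : ∀ x y, μ (Iic x ×ˢ Iic y) = ν (Iic x ×ˢ Iic y)) : μ = ν := by
  have hgen : MeasurableSpace.generateFrom (range (Iic : ℝ → Set ℝ))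
      = (inferInstance : MeasurableSpace ℝ) := by
    rw [← borel_eq_generateFrom_Iic ℝ]
    exact (BorelSpace.measurable_eq (α := ℝ)).symm
  have hspan : IsCountablySpanning (range (Iic : ℝ → Set ℝ)) := by
    refine ⟨fun n : ℕ => Iic (n : ℝ), fun n => ⟨n, rfl⟩, ?_⟩
    ext x
    simpa using exists_nat_ge x
  refine ext_of_generate_finite _ (generateFrom_eq_prod hgen hgen hspan hspan).symm
    (isPiSystem_Iic.prod isPiSystem_Iic) ?_ (by simp)
  rintro _ ⟨_, ⟨x, rfl⟩, _, ⟨y, rfl⟩, rfl⟩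
  exact h x y

lemma volume_Ioo_inter_Iic {c : ℝ} (hc : c ≤ 1) :
    volume (Iic c ∩ Ioo (0 : ℝ) 1) = ENNReal.ofReal c := by
  apply le_antisymm
  · calc volume (Iic c ∩ Ioo (0 : ℝ) 1)
      _ ≤ volume (Ioc 0 c) := measure_mono fun u hu => ⟨hu.2.1, hu.1⟩
      _ = _ := by simp
  · calc ENNReal.ofReal c = volume (Ioo 0 c) := by simp
      _ ≤ volume (Iic c ∩ Ioo (0 : ℝ) 1) := measure_mono fun u hu => ⟨hu.2.le, hu.1, hu.2.trans_le hc⟩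

/-- The joint distribution function of two nondecreasing functions of one variable is the minimum
of the marginal ones, because their sublevel sets are nested. -/
lemma measure_le_and_le_eq_min {Ω : Type*} [MeasurableSpace Ω] (P : Measure Ω) (Z : Ω → ℝ)
    {f g : ℝ → ℝ} (hf : Monotone f) (hg : Monotone g) (x y : ℝ) :
    P {ω | f (Z ω) ≤ x ∧ g (Z ω) ≤ y} = min (P {ω | f (Z ω) ≤ x}) (P {ω | g (Z ω) ≤ y}) := by
  have hA : IsLowerSet {z | f z ≤ x} := fun _ _ h h' => (hf h).trans h'
  have hB : IsLowerSet {z | g z ≤ y} := fun _ _ h h' => (hg h).trans h'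
  rcases hA.total hB with h | h
  · have hle : {ω | f (Z ω) ≤ x} ⊆ {ω | g (Z ω) ≤ y} := fun ω hω => h hω
    rw [min_eq_left (measure_mono hle)]
    congr 1
    ext ω
    exact ⟨fun hω => hω.1, fun hω => ⟨hω, h hω⟩⟩
  · have hle : {ω | g (Z ω) ≤ y} ⊆ {ω | f (Z ω) ≤ x} := fun ω hω => h hω
    rw [min_eq_right (measure_mono hle)]
    congr 1
    ext ω
    exact ⟨fun hω => hω.2, fun hω => ⟨h hω, hω⟩⟩

/-- `(X,Y)` is comonotonic iff `(X,Y)` has the same joint distribution as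
`(F⁻¹(U), G⁻¹(U))` where `U` is uniform on `(0,1)` (i.e. the joint law equals the
pushforward of Lebesgue measure on `(0,1)` under `u ↦ (F⁻¹(u), G⁻¹(u))`). -/
theorem comonotonic_iff_quantile_representation {Ω : Type*} [MeasurableSpace Ω]
    (P : MeasureTheory.Measure Ω) [IsProbabilityMeasure P]
    (X Y : Ω → ℝ) (hX : Measurable X) (hY : Measurable Y)
    (F G : ℝ → ℝ)
    (hF : ∀ x, F x = (P {ω | X ω ≤ x}).toReal)
    (hG : ∀ y, G y = (P {ω | Y ω ≤ y}).toReal) :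
    Comonotonic P X Y ↔
      P.map (fun ω => (X ω, Y ω))
        = MeasureTheory.Measure.map (fun u => (qinv F u, qinv G u))
            (MeasureTheory.volume.restrict (Ioo (0:ℝ) 1)) := by
  have := Measure.isProbabilityMeasure_map (μ := P) hX.aemeasurable
  have := Measure.isProbabilityMeasure_map (μ := P) hY.aemeasurable
  have hFP : ∀ x, ENNReal.ofReal (F x) = P {ω | X ω ≤ x} := fun x => by
    rw [hF, ENNReal.ofReal_toReal (measure_ne_top _ _)]
  have hGP : ∀ x, ENNReal.ofReal (G x) = P {ω | Y ω ≤ x} := fun x => by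
    rw [hG, ENNReal.ofReal_toReal (measure_ne_top _ _)]
  obtain rfl : F = cdf (P.map X) := by
    funext x
    rw [hF, cdf_eq_real, Measure.real, Measure.map_apply hX measurableSet_Iic]
    rfl
  obtain rfl : G = cdf (P.map Y) := by
    funext x
    rw [hG, cdf_eq_real, Measure.real, Measure.map_apply hY measurableSet_Iic]
    rfl
  have ha := monotoneOn_qinv_cdf (P.map X)
  have hb := monotoneOn_qinv_cdf (P.map Y)
  have hq : AEMeasurable (fun u => (qinv (cdf (P.map X)) u, qinv (cdf (P.map Y)) u))
      (volume.restrict (Ioo (0:ℝ) 1)) :=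
    (aemeasurable_restrict_of_monotoneOn measurableSet_Ioo ha).prodMk
      (aemeasurable_restrict_of_monotoneOn measurableSet_Ioo hb)
  have : IsProbabilityMeasure (volume.restrict (Ioo (0:ℝ) 1)) := ⟨by simp⟩
  have := Measure.isProbabilityMeasure_map hq
  have hXY : Measurable fun ω => (X ω, Y ω) := hX.prodMk hY
  have := Measure.isProbabilityMeasure_map (μ := P) hXY.aemeasurable
  constructor
  · rintro ⟨Z, f, g, hZ, hf, hg, hlaw⟩
    have hfg : Measurable fun ω => (f (Z ω), g (Z ω)) :=
      (hf.measurable.comp hZ).prodMk (hg.measurable.comp hZ)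
    have hfst : ∀ x, P {ω | X ω ≤ x} = P {ω | f (Z ω) ≤ x} := fun x => by
      have hm : MeasurableSet {p : ℝ × ℝ | p.1 ≤ x} := measurable_fst measurableSet_Iic
      have h := congrArg (fun m => m {p : ℝ × ℝ | p.1 ≤ x}) hlaw
      simp only [Measure.map_apply hXY hm, Measure.map_apply hfg hm] at h
      exact h
    have hsnd : ∀ y, P {ω | Y ω ≤ y} = P {ω | g (Z ω) ≤ y} := fun y => by
      have hm : MeasurableSet {p : ℝ × ℝ | p.2 ≤ y} := measurable_snd measurableSet_Iic
      have h := congrArg (fun m => m {p : ℝ × ℝ | p.2 ≤ y}) hlaw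
      simp only [Measure.map_apply hXY hm, Measure.map_apply hfg hm] at h
      exact h
    apply ext_of_Iic_prod
    intro x y
    have hm : MeasurableSet (Iic x ×ˢ Iic y) := measurableSet_Iic.prod measurableSet_Iic
    rw [hlaw, Measure.map_apply hfg hm, Measure.map_apply_of_aemeasurable hq hm,
      Measure.restrict_apply' measurableSet_Ioo]
    have hset : (fun u => (qinv (cdf (P.map X)) u, qinv (cdf (P.map Y)) u)) ⁻¹'
        (Iic x ×ˢ Iic y) ∩ Ioo (0:ℝ) 1
        = Iic (min (cdf (P.map X) x) (cdf (P.map Y) y)) ∩ Ioo (0:ℝ) 1 := by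
      ext u
      simp only [mem_inter_iff, mem_preimage, mem_prod, mem_Iic, le_min_iff]
      refine and_congr_left fun hu => ?_
      rw [qinv_cdf_le_iff _ hu, qinv_cdf_le_iff _ hu]
    rw [hset, volume_Ioo_inter_Iic ((min_le_left _ _).trans (cdf_le_one _ _)),
      ENNReal.ofReal_min, hFP, hGP, hfst, hsnd]
    exact measure_le_and_le_eq_min P Z hf hg x y
  · intro hlaw
    obtain ⟨f, hf, hfa⟩ := exists_monotone_of_add ha hb
    obtain ⟨g, hg, hgb⟩ := exists_monotone_of_add hb ha
    refine ⟨fun ω => X ω + Y ω, f, g, hX.add hY, hf, hg, ?_⟩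
    have hT : Measurable fun p : ℝ × ℝ => (f (p.1 + p.2), g (p.1 + p.2)) :=
      (hf.measurable.comp (measurable_fst.add measurable_snd)).prodMk
        (hg.measurable.comp (measurable_fst.add measurable_snd))
    have h1 : P.map (fun ω => (f (X ω + Y ω), g (X ω + Y ω)))
        = (P.map fun ω => (X ω, Y ω)).map
          fun p : ℝ × ℝ => (f (p.1 + p.2), g (p.1 + p.2)) := by
      rw [Measure.map_map hT hXY]
      rfl
    rw [h1, hlaw, AEMeasurable.map_map_of_aemeasurable hT.aemeasurable hq]
    apply Measure.map_congr
    filter_upwards [ae_restrict_mem measurableSet_Ioo] with u hu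
    simp only [Function.comp]
    rw [hfa u hu, add_comm, hgb u hu]
end

section
/- Let d > 1 and let μ, ν be probability measures on ℝ^d whose joint distribution functions are H_μ(x₁,…,x_d) = min{F₁(x₁),…,F_d(x_d)} and H_ν(y₁,…,y_d) = min{G₁(y₁),…,G_d(y_d)}, where F_i and G_i are the marginal distribution functions of μ and ν. Then there exists a coupling π of μ and ν whose joint distribution function on ℝ^{2d} is H(x₁,…,x_d,y₁,…,y_d) = min{F₁(x₁),…,F_d(x_d),G₁(y₁),…,G_d(y_d)}. -/
/-!
Comonotone measures are driven by a single uniform random variable. Writing `F i` for the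
`i`-th marginal distribution function of `μ`, the quantile functions `q i` satisfy the Galois
relation `q i u ≤ t ↔ u ≤ F i t` on `(0, 1)`, so for `U` uniform on `(0, 1)` the vector
`(q i U)_i` has joint distribution function `P(U ≤ min_i F i (x i)) = min_i F i (x i)`.
Probability measures on `ℝ^d` are determined by their values on lower orthants
(`measure_ext_of_orthants`), so this vector has law `μ` (`map_quantileVec`). Feeding the *same*
`U` into the quantile vectors of `μ` and `ν` gives the coupling, and the same computation
yields its joint distribution function.
-/

open MeasureTheory ENNReal Set

open ProbabilityTheory

/-- The quantile function of `ρ`: the generalized inverse of its distribution function on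
`(0, 1)`, extended by `0` elsewhere. -/
noncomputable def quantile (ρ : Measure ℝ) (u : ℝ) : ℝ :=
  open Classical in if u ∈ Ioo (0 : ℝ) 1 then sInf {t | u ≤ cdf ρ t} else 0

/-- The Galois relation between quantile function and distribution function; the direction from
left to right uses right-continuity of the latter. -/
lemma quantile_le_iff (ρ : Measure ℝ) {u : ℝ} (hu : u ∈ Ioo (0 : ℝ) 1) (t : ℝ) :
    quantile ρ u ≤ t ↔ u ≤ cdf ρ t := by
  rw [quantile, if_pos hu]
  have hne : {t | u ≤ cdf ρ t}.Nonempty := by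
    obtain ⟨s, hs⟩ := ((tendsto_cdf_atTop ρ).eventually (lt_mem_nhds hu.2)).exists
    exact ⟨s, hs.le⟩
  have hbdd : BddBelow {t | u ≤ cdf ρ t} := by
    obtain ⟨s, hs⟩ := ((tendsto_cdf_atBot ρ).eventually (gt_mem_nhds hu.1)).exists
    refine ⟨s, fun r hr => ?_⟩
    by_contra! h
    exact absurd (hr.trans (monotone_cdf ρ h.le)) (not_le.2 hs)
  constructor
  · intro h
    have hr := continuousWithinAt_Ioi_iff_Ici.mpr ((cdf ρ).right_continuous t)
    refine ge_of_tendsto hr (eventually_nhdsWithin_of_forall fun s hs => ?_)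
    obtain ⟨r, hr, hrs⟩ := exists_lt_of_csInf_lt hne (lt_of_le_of_lt h hs)
    exact le_trans hr (monotone_cdf ρ hrs.le)
  · exact fun h => csInf_le hbdd h

lemma measurable_quantile (ρ : Measure ℝ) : Measurable (quantile ρ) := by
  refine measurable_of_Iic fun t => ?_
  have : quantile ρ ⁻¹' Iic t =
      (Ioo 0 1 ∩ Iic (cdf ρ t)) ∪ ((Ioo 0 1)ᶜ ∩ {_u | (0 : ℝ) ≤ t}) := by
    ext u
    by_cases hu : u ∈ Ioo (0 : ℝ) 1
    · simp only [mem_preimage, mem_Iic, quantile_le_iff ρ hu, mem_union, mem_inter_iff, hu,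
        mem_compl_iff, not_true, true_and, false_and, or_false]
    · have hq : quantile ρ u = 0 := if_neg hu
      simp only [mem_preimage, mem_Iic, hq, mem_union, mem_inter_iff, hu,
        mem_compl_iff, not_false_iff, true_and, false_and, false_or, mem_ofPred_eq]
  rw [this]
  exact (measurableSet_Ioo.inter measurableSet_Iic).union
    (measurableSet_Ioo.compl.inter (MeasurableSet.const _))

/-- The uniform distribution on `(0, 1)`. -/
noncomputable def unif : Measure ℝ := volume.restrict (Ioo (0 : ℝ) 1)

lemma unif_Iic {c : ℝ} (h1 : c ≤ 1) : unif (Iic c) = ENNReal.ofReal c := by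
  rw [unif, Measure.restrict_congr_set Ioo_ae_eq_Ioc, Measure.restrict_apply measurableSet_Iic,
    inter_comm, Ioc_inter_Iic, min_eq_right h1, Real.volume_Ioc, sub_zero]

instance : IsProbabilityMeasure unif := ⟨by simp [unif]⟩

/-- The vector of marginal quantile functions of `μ`, evaluated at a common level. -/
noncomputable def quantileVec {d : ℕ} (μ : Measure (Fin d → ℝ)) (u : ℝ) : Fin d → ℝ :=
  fun i => quantile (μ.map (fun x => x i)) u

lemma measurable_quantileVec {d : ℕ} (μ : Measure (Fin d → ℝ)) : Measurable (quantileVec μ) :=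
  measurable_pi_lambda _ fun _ => measurable_quantile _

lemma measurableSet_orthant {d : ℕ} (x : Fin d → ℝ) :
    MeasurableSet {a : Fin d → ℝ | ∀ i, a i ≤ x i} :=
  measurableSet_Iic (a := x)

lemma quantileVec_le_iff {d : ℕ} [NeZero d] (μ : Measure (Fin d → ℝ)) [IsProbabilityMeasure μ]
    (F : Fin d → ℝ → ℝ) (hF : ∀ i t, F i t = (μ {x | x i ≤ t}).toReal)
    {u : ℝ} (hu : u ∈ Ioo (0 : ℝ) 1) (x : Fin d → ℝ) :
    (∀ i, quantileVec μ u i ≤ x i) ↔ u ≤ ⨅ i, F i (x i) := by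
  rw [le_ciInf_iff (Set.finite_range _).bddBelow]
  refine forall_congr' fun i => ?_
  have hm : Measurable (fun x : Fin d → ℝ => x i) := measurable_pi_apply i
  have := Measure.isProbabilityMeasure_map (μ := μ) hm.aemeasurable
  rw [quantileVec, quantile_le_iff _ hu, cdf_eq_real, hF, Measure.real,
    Measure.map_apply hm measurableSet_Iic]
  rfl

/-- Probability measures on `ℝ^d` are determined by their joint distribution functions. -/
lemma measure_ext_of_orthants {d : ℕ} (μ ν : Measure (Fin d → ℝ)) [IsProbabilityMeasure μ]
    [IsProbabilityMeasure ν]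
    (h : ∀ x : Fin d → ℝ, μ {a | ∀ i, a i ≤ x i} = ν {a | ∀ i, a i ≤ x i}) : μ = ν := by
  refine ext_of_generate_finite (pi univ '' pi univ fun _ : Fin d => range (Iic : ℝ → Set ℝ))
    (generateFrom_eq_pi (fun _ => ?_) (fun _ => ?_)).symm
    (IsPiSystem.pi fun _ => isPiSystem_Iic) ?_ (by simp)
  · rw [BorelSpace.measurable_eq (α := ℝ), borel_eq_generateFrom_Iic]
  · exact ⟨fun n : ℕ => Iic (n : ℝ), fun n => ⟨_, rfl⟩,
      iUnion_eq_univ_iff.2 fun x => exists_nat_ge x⟩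
  · rintro _ ⟨s, hs, rfl⟩
    choose x hx using fun i => hs i (mem_univ i)
    have : pi univ s = {a | ∀ i, a i ≤ x i} := by
      ext a
      simp [← hx]
    rw [this, h x]

lemma iInf_mem_Icc {d : ℕ} [NeZero d] (μ : Measure (Fin d → ℝ)) [IsProbabilityMeasure μ]
    (F : Fin d → ℝ → ℝ) (hF : ∀ i t, F i t = (μ {x | x i ≤ t}).toReal) (x : Fin d → ℝ) :
    (⨅ i, F i (x i)) ∈ Icc (0 : ℝ) 1 := by
  refine ⟨le_ciInf fun i => ?_, (ciInf_le (Set.finite_range _).bddBelow 0).trans ?_⟩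
  · rw [hF]; exact toReal_nonneg
  · rw [hF]; exact measureReal_le_one

/-- A comonotone measure is the law of its quantile vector at a uniform level. -/
lemma map_quantileVec {d : ℕ} [NeZero d] (μ : Measure (Fin d → ℝ)) [IsProbabilityMeasure μ]
    (F : Fin d → ℝ → ℝ) (hF : ∀ i t, F i t = (μ {x | x i ≤ t}).toReal)
    (hM : ∀ x : Fin d → ℝ, (μ {y | ∀ i, y i ≤ x i}).toReal = ⨅ i, F i (x i)) :
    unif.map (quantileVec μ) = μ := by
  have := Measure.isProbabilityMeasure_map (μ := unif) (measurable_quantileVec μ).aemeasurable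
  refine measure_ext_of_orthants _ _ fun x => ?_
  obtain ⟨h0, h1⟩ := iInf_mem_Icc μ F hF x
  rw [Measure.map_apply (measurable_quantileVec μ) (measurableSet_orthant x),
    ← ofReal_toReal (measure_ne_top μ _), hM, ← unif_Iic h1]
  refine measure_congr ?_
  filter_upwards [ae_restrict_mem measurableSet_Ioo] with u hu
  exact propext (quantileVec_le_iff μ F hF hu x)

/-- if `μ, ν` on `ℝ^d` have comonotone joint distribution functions
`H_μ(x) = min_i F_i(x_i)` and `H_ν(y) = min_i G_i(y_i)`, then there exists a coupling
`π` of `μ` and `ν` whose joint distribution function on `ℝ^{2d}` is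
`min {F₁(x₁), …, F_d(x_d), G₁(y₁), …, G_d(y_d)}`. -/
theorem exists_comonotone_coupling (d : ℕ) (hd : 1 < d)
    (μ ν : MeasureTheory.Measure (Fin d → ℝ)) [IsProbabilityMeasure μ] [IsProbabilityMeasure ν]
    (F G : Fin d → ℝ → ℝ)
    (hF : ∀ i t, F i t = (μ {x | x i ≤ t}).toReal)
    (hG : ∀ i t, G i t = (ν {x | x i ≤ t}).toReal)
    (hμM : ∀ x : Fin d → ℝ, (μ {y | ∀ i, y i ≤ x i}).toReal = ⨅ i, F i (x i))
    (hνM : ∀ y : Fin d → ℝ, (ν {z | ∀ i, z i ≤ y i}).toReal = ⨅ i, G i (y i)) :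
    ∃ π : MeasureTheory.Measure ((Fin d → ℝ) × (Fin d → ℝ)), IsCoupling π μ ν ∧
      ∀ x y : Fin d → ℝ,
        (π ({a | ∀ i, a i ≤ x i} ×ˢ {b | ∀ i, b i ≤ y i})).toReal
          = min (⨅ i, F i (x i)) (⨅ i, G i (y i)) := by
  have : NeZero d := ⟨by omega⟩
  have hm : Measurable (fun u => (quantileVec μ u, quantileVec ν u)) :=
    (measurable_quantileVec μ).prodMk (measurable_quantileVec ν)
  refine ⟨unif.map (fun u => (quantileVec μ u, quantileVec ν u)), ⟨?_, ?_⟩, fun x y => ?_⟩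
  · rw [Measure.map_map measurable_fst hm]
    exact map_quantileVec μ F hF hμM
  · rw [Measure.map_map measurable_snd hm]
    exact map_quantileVec ν G hG hνM
  · obtain ⟨h0, h1⟩ := iInf_mem_Icc μ F hF x
    have h0' := (iInf_mem_Icc ν G hG y).1
    rw [Measure.map_apply hm ((measurableSet_orthant x).prod (measurableSet_orthant y)),
      ← toReal_ofReal (le_min h0 h0'), ← unif_Iic (min_le_of_left_le h1)]
    refine congrArg ENNReal.toReal (measure_congr ?_)
    filter_upwards [ae_restrict_mem measurableSet_Ioo] with u hu
    exact propext ((and_congr (quantileVec_le_iff μ F hF hu x)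
      (quantileVec_le_iff ν G hG hu y)).trans le_min_iff.symm)
end
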